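/- Let T be a finite tree with at least three vertices. Then the domination subdivision number of T equals 3 (i.e., sd(T) = 3) if and only if T is a general corona of a tree. -/

import Mathlib

open SimpleGraph

namespace GenCorona

universe u

/-- A vertex neighborhood partition of a graph `G`: for every vertex `v`, a partition
of the open neighborhood `N_G(v)` into nonempty sets. -/
structure NbhdPartition {V : Type u} (G : SimpleGraph V) where
  part : V → Set (Set V)
  nonempty : ∀ v : V, ∀ A ∈ part v, A.Nonempty
  subset_nbhd : ∀ v : V, ∀ A ∈ part v, A ⊆ G.neighborSet v
  covers : ∀ v : V, ∀ u ∈ G.neighborSet v, ∃ A ∈ part v, u ∈ A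
  eq_of_inter : ∀ v : V, ∀ A ∈ part v, ∀ B ∈ part v, (A ∩ B).Nonempty → A = B

variable {V : Type u}

/-- The vertex type of the general corona `G ∘ 𝒫`: external vertices `(v,1)` are encoded
as `Sum.inl v`, internal vertices `(v,A)` (with `A ∈ 𝒫(v)`) as `Sum.inr ⟨(v,A), _⟩`. -/
abbrev CoronaVert (G : SimpleGraph V) (P : NbhdPartition G) : Type u :=
  V ⊕ {p : V × Set V // p.2 ∈ P.part p.1}

/-- The general corona `G ∘ 𝒫`. -/
def corona (G : SimpleGraph V) (P : NbhdPartition G) : SimpleGraph (CoronaVert G P) :=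
  SimpleGraph.fromRel fun x y =>
    match x, y with
    | Sum.inl v, Sum.inr p => v = p.val.1
    | Sum.inr p, Sum.inr q =>
        G.Adj p.val.1 q.val.1 ∧ q.val.1 ∈ p.val.2 ∧ p.val.1 ∈ q.val.2
    | _, _ => False

/-- The set of external vertices of the general corona. -/
def Ext (G : SimpleGraph V) (P : NbhdPartition G) : Set (CoronaVert G P) :=
  Set.range Sum.inl

/-- A graph is a general corona of a tree if it is isomorphic to `T ∘ 𝒫` for some finite
tree `T` and some vertex neighborhood partition `𝒫` of `T`. -/
def IsGeneralCoronaOfTree {W : Type*} (H : SimpleGraph W) : Prop :=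
  ∃ (n : ℕ) (T : SimpleGraph (Fin n)) (P : NbhdPartition T),
    T.IsTree ∧ Nonempty (H ≃g corona T P)

/-- A graph `H` is a general corona of a tree with external vertex set `E`. -/
def IsGenCoronaWithExt {W : Type*} (H : SimpleGraph W) (E : Set W) : Prop :=
  ∃ (n : ℕ) (T : SimpleGraph (Fin n)) (P : NbhdPartition T),
    T.IsTree ∧ ∃ f : H ≃g corona T P, E = ⇑f ⁻¹' Ext T P

/-- `D` is a dominating set of `G`. -/
def IsDominating (G : SimpleGraph V) (D : Set V) : Prop :=
  ∀ v ∉ D, ∃ u ∈ D, G.Adj v u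

/-- `S` is a 2-packing of `G`: any two distinct vertices of `S` are at distance
greater than 2 (where the extended distance of unreachable vertices is `⊤`). -/
def Is2Packing (G : SimpleGraph V) (S : Set V) : Prop :=
  ∀ u ∈ S, ∀ v ∈ S, u ≠ v → 2 < G.edist u v

/-- A leaf is a vertex of degree 1, i.e. with exactly one neighbor. -/
def IsLeaf (G : SimpleGraph V) (v : V) : Prop :=
  (G.neighborSet v).ncard = 1

/-- The domination number: the minimum size of a dominating set. -/
noncomputable def dominationNumber (G : SimpleGraph V) : ℕ :=
  sInf {n : ℕ | ∃ D : Set V, IsDominating G D ∧ D.ncard = n}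

/-- The graph obtained from `G` by subdividing every edge in `F` (each once):
for each `e ∈ F` a new vertex `Sum.inr e` replaces the edge `e` by a path of length two. -/
def subdivide (G : SimpleGraph V) (F : Set (Sym2 V)) : SimpleGraph (V ⊕ F) :=
  SimpleGraph.fromRel fun x y =>
    match x, y with
    | Sum.inl u, Sum.inl v => G.Adj u v ∧ s(u, v) ∉ F
    | Sum.inl u, Sum.inr e => u ∈ e.val
    | _, _ => False

/-- The domination subdivision number `sd(G)`: the minimum number of edges which must be
subdivided (each edge at most once) in order to increase the domination number. -/
noncomputable def sd (G : SimpleGraph V) : ℕ :=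
  sInf {k : ℕ | ∃ F : Set (Sym2 V), F ⊆ G.edgeSet ∧ F.ncard = k ∧
    dominationNumber G < dominationNumber (subdivide G F)}

/-- The corona `G ∘ K₁`: attach one new pendant vertex `Sum.inr v` to each vertex
`Sum.inl v` of `G`. -/
def coronaK1 (G : SimpleGraph V) : SimpleGraph (V ⊕ V) :=
  SimpleGraph.fromRel fun x y =>
    match x, y with
    | Sum.inl u, Sum.inl w => G.Adj u w
    | Sum.inl u, Sum.inr w => u = w
    | _, _ => False

/-- The 2-subdivision `S₂(G)`: every edge `uv` is replaced by a path `(u, x₁, x₂, v)`;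
the new vertex `Sum.inr ⟨(u,v), _⟩` is the subdivision vertex adjacent to `u`. -/
def twoSubdivision (G : SimpleGraph V) : SimpleGraph (V ⊕ {p : V × V // G.Adj p.1 p.2}) :=
  SimpleGraph.fromRel fun x y =>
    match x, y with
    | Sum.inl u, Sum.inr p => u = p.val.1
    | Sum.inr p, Sum.inr q => p.val.1 = q.val.2 ∧ p.val.2 = q.val.1
    | _, _ => False

/-- `𝒫'` is a refinement of `𝒫`. -/
def Refines {G : SimpleGraph V} (P' P : NbhdPartition G) : Prop :=
  ∀ v : V, ∀ A ∈ P'.part v, ∃ B ∈ P.part v, A ⊆ B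

/-- The graph obtained by contracting the two vertices `x` and `y` of `G` to the single
vertex `x` (the vertex `y` is removed, and `x` becomes adjacent to all former
neighbors of `y`). -/
def contractPair {W : Type*} (G : SimpleGraph W) (x y : W) :
    SimpleGraph {w : W // w ≠ y} :=
  SimpleGraph.fromRel fun a b =>
    G.Adj a.val b.val ∨ (a.val = x ∧ G.Adj y b.val) ∨ (b.val = x ∧ G.Adj a.val y)

/-- The graph obtained from `G` by attaching a path `(x, y, z)` (encoded as
`Sum.inr 0, Sum.inr 1, Sum.inr 2`) to the vertex `v` via the edge `v x`. -/
def attachPath3 {W : Type*} (G : SimpleGraph W) (v : W) : SimpleGraph (W ⊕ Fin 3) :=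
  SimpleGraph.fromRel fun a b =>
    match a, b with
    | Sum.inl u, Sum.inl w => G.Adj u w
    | Sum.inl u, Sum.inr i => u = v ∧ i = 0
    | Sum.inr i, Sum.inr j => (i = 0 ∧ j = 1) ∨ (i = 1 ∧ j = 2)
    | _, _ => False

/-- The graph obtained from `G` by attaching a path `(x, y)` (encoded as
`Sum.inr 0, Sum.inr 1`) to the vertex `v` via the edge `v x`. -/
def attachPath2 {W : Type*} (G : SimpleGraph W) (v : W) : SimpleGraph (W ⊕ Fin 2) :=
  SimpleGraph.fromRel fun a b =>
    match a, b with
    | Sum.inl u, Sum.inl w => G.Adj u w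
    | Sum.inl u, Sum.inr i => u = v ∧ i = 0
    | Sum.inr i, Sum.inr j => i = 0 ∧ j = 1
    | _, _ => False

/-- The family `𝓕` of labeled trees; the label of a vertex is `A` when it belongs to the
distinguished set `L`, and `B` otherwise.  The family contains the labeled path `P₄`
(leaves labeled `A`, support vertices labeled `B`) and is closed under the two
attachment operations. -/
inductive LabF : ∀ {W : Type}, SimpleGraph W → Set W → Prop where
  | base : LabF (SimpleGraph.pathGraph 4) ({0, 3} : Set (Fin 4))
  | opA {W : Type} {G : SimpleGraph W} {L : Set W} (v : W) :
      LabF G L → v ∈ L →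
        LabF (attachPath3 G v) (Sum.inl '' L ∪ {Sum.inr (2 : Fin 3)})
  | opB {W : Type} {G : SimpleGraph W} {L : Set W} (v : W) :
      LabF G L → v ∉ L →
        LabF (attachPath2 G v) (Sum.inl '' L ∪ {Sum.inr (1 : Fin 2)})

/-- A tree `T` belongs to the family `𝓕` if it admits a labeling constructed by the
above rules, i.e. it is isomorphic to a member of the inductively generated family. -/
def MemF {W : Type*} (T : SimpleGraph W) : Prop :=
  ∃ (W' : Type) (G : SimpleGraph W') (L : Set W'), LabF G L ∧ Nonempty (T ≃g G)

/-!
A *corona code* is a set `E` whose closed neighborhoods partition the vertices and whose complement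
has no isolated vertices. For a tree `T`, both sides of the theorem say that a corona code exists.

If `S` is a 2-packing, `y, z ∉ S` are adjacent, and `yz` is subdivided together with all edges from
`y` or `z` to `S`, then `S` and the vertex subdividing `yz` form a larger 2-packing. Since a tree
has a 2-packing `S` of size `γ(T)` (choose deepest vertices greedily), and since `y` and `z` have at
most one neighbor each in `S`, this gives `sd(T) ≤ 3` for a corona code `S`. It gives `sd(T) ≤ 2` if
some `y` is not dominated by `S`; if `S` is dominating but `x ∉ S` is isolated outside `S`,
replacing the neighbor of `x` in `S` by `x` leads to this case.

Conversely, let at most two edges of a tree with a corona code `E` be subdivided, and root the tree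
so that neither edge lies above the other. Moving every vertex of `E` below one of these edges one
step towards the root yields a dominating set of the subdivided tree, so `sd(T) ≥ 3`.

Finally, the external vertices of a general corona form a corona code, and a tree with a corona code
is the general corona of the tree obtained by contracting the closed neighborhoods of the code.
-/

section Adjacency

variable {G : SimpleGraph V} {F : Set (Sym2 V)} {u v : V} {e f : F}

@[simp]
lemma subdivide_adj_inl_inl :
    (subdivide G F).Adj (Sum.inl u) (Sum.inl v) ↔ G.Adj u v ∧ s(u, v) ∉ F := by
  simp only [subdivide, fromRel_adj, ne_eq, Sum.inl.injEq, G.adj_comm v u,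
    Sym2.eq_swap (a := v), or_self]
  exact ⟨And.right, fun h => ⟨h.1.ne, h⟩⟩

@[simp]
lemma subdivide_adj_inl_inr : (subdivide G F).Adj (Sum.inl u) (Sum.inr e) ↔ u ∈ e.val := by
  simp [subdivide]

@[simp]
lemma subdivide_adj_inr_inl : (subdivide G F).Adj (Sum.inr e) (Sum.inl u) ↔ u ∈ e.val := by
  simp [subdivide]

@[simp]
lemma not_subdivide_adj_inr_inr : ¬(subdivide G F).Adj (Sum.inr e) (Sum.inr f) := by
  simp [subdivide]

variable {P : NbhdPartition G} {p q : {p : V × Set V // p.2 ∈ P.part p.1}}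

@[simp]
lemma not_corona_adj_inl_inl : ¬(corona G P).Adj (Sum.inl u) (Sum.inl v) := by
  simp [corona]

@[simp]
lemma corona_adj_inl_inr : (corona G P).Adj (Sum.inl v) (Sum.inr p) ↔ v = p.val.1 := by
  simp [corona]

@[simp]
lemma corona_adj_inr_inl : (corona G P).Adj (Sum.inr p) (Sum.inl v) ↔ v = p.val.1 := by
  simp [corona]

@[simp]
lemma corona_adj_inr_inr : (corona G P).Adj (Sum.inr p) (Sum.inr q) ↔
    G.Adj p.val.1 q.val.1 ∧ q.val.1 ∈ p.val.2 ∧ p.val.1 ∈ q.val.2 := by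
  simp only [corona, fromRel_adj, ne_eq, Sum.inr.injEq, G.adj_comm q.val.1]
  have hne (h : G.Adj p.val.1 q.val.1) : p ≠ q := by
    rintro rfl
    exact G.irrefl h
  tauto

end Adjacency

section Domination

variable {G : SimpleGraph V} {S D E : Set V} {F : Set (Sym2 V)}

lemma mem_ball_two {u v : V} : v ∈ G.ball u 2 ↔ v = u ∨ G.Adj u v := by
  simp [ball_two]

lemma isDominating_iff : IsDominating G D ↔ ∀ v, ∃ d ∈ D, v ∈ G.ball d 2 := by
  refine forall_congr' fun v => ⟨fun h => ?_, fun ⟨d, hd, hv⟩ hvD => ?_⟩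
  · by_cases hv : v ∈ D
    · exact ⟨v, hv, mem_ball_two.2 (.inl rfl)⟩
    · obtain ⟨d, hd, hvd⟩ := h hv
      exact ⟨d, hd, mem_ball_two.2 (.inr hvd.symm)⟩
  · obtain rfl | hdv := mem_ball_two.1 hv
    · contradiction
    · exact ⟨d, hd, hdv.symm⟩

lemma is2Packing_iff_pairwiseDisjoint :
    Is2Packing G S ↔ S.PairwiseDisjoint (G.ball · 2) := by
  have hdisjoint {u v : V} (huv : u ≠ v) :
      2 < G.edist u v ↔ Disjoint (G.ball u 2) (G.ball v 2) := by
    rw [two_lt_edist_iff, Set.disjoint_left]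
    simp only [mem_ball_two, Set.eq_empty_iff_forall_notMem, mem_commonNeighbors]
    constructor
    · rintro ⟨-, hadj, hcommon⟩ x (rfl | hux) (rfl | hvx)
      exacts [huv rfl, hadj hvx.symm, hadj hux, hcommon x ⟨hux, hvx⟩]
    · intro h
      exact ⟨huv, fun huv' => h (.inr huv') (.inl rfl), fun x hx => h (.inr hx.1) (.inr hx.2)⟩
  exact ⟨fun h u hu v hv huv => (hdisjoint huv).1 (h u hu v hv huv),
    fun h u hu v hv huv => (hdisjoint huv).2 (h hu hv huv)⟩

lemma Is2Packing.eq_of_mem_ball (hS : Is2Packing G S) {s t x : V} (hs : s ∈ S) (ht : t ∈ S)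
    (hxs : x ∈ G.ball s 2) (hxt : x ∈ G.ball t 2) : s = t :=
  (is2Packing_iff_pairwiseDisjoint.1 hS).elim_set hs ht x hxs hxt

lemma Is2Packing.not_adj (hS : Is2Packing G S) {s t : V} (hs : s ∈ S) (ht : t ∈ S) :
    ¬G.Adj s t := fun hst =>
  hst.ne (hS.eq_of_mem_ball hs ht (mem_ball_two.2 (.inr hst)) (mem_ball_two.2 (.inl rfl)))

lemma Is2Packing.eq_of_adj (hS : Is2Packing G S) {s t x : V} (hs : s ∈ S) (ht : t ∈ S)
    (hsx : G.Adj s x) (htx : G.Adj t x) : s = t :=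
  hS.eq_of_mem_ball hs ht (mem_ball_two.2 (.inr hsx)) (mem_ball_two.2 (.inr htx))

lemma dominationNumber_le (hD : IsDominating G D) : dominationNumber G ≤ D.ncard :=
  Nat.sInf_le ⟨D, hD, rfl⟩

lemma exists_isDominating_ncard_eq (G : SimpleGraph V) :
    ∃ D, IsDominating G D ∧ D.ncard = dominationNumber G :=
  Nat.sInf_mem (s := {n : ℕ | ∃ D : Set V, IsDominating G D ∧ D.ncard = n})
    ⟨_, Set.univ, fun v hv => absurd (Set.mem_univ v) hv, rfl⟩

lemma Is2Packing.ncard_le_dominationNumber [Finite V] (hS : Is2Packing G S) :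
    S.ncard ≤ dominationNumber G := by
  obtain ⟨D, hD, hcard⟩ := exists_isDominating_ncard_eq G
  choose d hdD hd using isDominating_iff.1 hD
  rw [← hcard]
  refine Set.ncard_le_ncard_of_injOn d (fun s _ => hdD s) fun s hs t ht hst => ?_
  exact hS.eq_of_mem_ball hs ht (mem_ball_comm.1 (hd s)) (mem_ball_comm.1 (hst ▸ hd t))

lemma sd_le_ncard (hF : F ⊆ G.edgeSet)
    (h : dominationNumber G < dominationNumber (subdivide G F)) : sd G ≤ F.ncard :=
  Nat.sInf_le ⟨F, hF, rfl, h⟩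

lemma le_sd {k : ℕ}
    (hex : ∃ F ⊆ G.edgeSet, dominationNumber G < dominationNumber (subdivide G F))
    (h : ∀ F ⊆ G.edgeSet, dominationNumber G < dominationNumber (subdivide G F) → k ≤ F.ncard) :
    k ≤ sd G := by
  obtain ⟨F, hF, hlt⟩ := hex
  refine le_csInf ⟨_, F, hF, rfl, hlt⟩ ?_
  rintro _ ⟨F', hF', rfl, hlt'⟩
  exact h F' hF' hlt'

/-- A perfect code, also called an efficient dominating set: the closed neighborhoods of the
vertices of `E` partition the vertex set. -/
structure IsPerfectCode (G : SimpleGraph V) (E : Set V) : Prop where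
  is2Packing : Is2Packing G E
  isDominating : IsDominating G E

/-- A perfect code whose complement induces a graph without isolated vertices. In a tree, these
are the sets of external vertices of the representations of the tree as a general corona. -/
structure IsCoronaCode (G : SimpleGraph V) (E : Set V) : Prop extends IsPerfectCode G E where
  exists_adj_notMem : ∀ x ∉ E, ∃ y ∉ E, G.Adj x y

lemma IsPerfectCode.ncard_eq [Finite V] (hE : IsPerfectCode G E) :
    E.ncard = dominationNumber G :=
  hE.is2Packing.ncard_le_dominationNumber.antisymm (dominationNumber_le hE.isDominating)

end Domination

section UpperBound

variable {G : SimpleGraph V} {S E : Set V} {F : Set (Sym2 V)} {s x y z : V}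

lemma Is2Packing.image_inl_subdivide (hS : Is2Packing G S) (hF : F ⊆ G.edgeSet) :
    Is2Packing (subdivide G F) (Sum.inl '' S) := by
  rw [is2Packing_iff_pairwiseDisjoint]
  rintro _ ⟨s, hs, rfl⟩ _ ⟨t, ht, rfl⟩ hst
  have hne : s ≠ t := fun h => hst (congrArg Sum.inl h)
  refine Set.disjoint_left.2 ?_
  rintro (v | e) hvs hvt <;>
    simp only [mem_ball_two, Sum.inl.injEq, reduceCtorEq, subdivide_adj_inl_inl,
      subdivide_adj_inl_inr, false_or] at hvs hvt
  · exact hne (hS.eq_of_mem_ball hs ht (mem_ball_two.2 (hvs.imp_right And.left))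
      (mem_ball_two.2 (hvt.imp_right And.left)))
  · have he := hF e.property
    rw [(Sym2.mem_and_mem_iff hne).1 ⟨hvs, hvt⟩] at he
    exact hS.not_adj hs ht he

lemma Is2Packing.insert_inr_subdivide (hS : Is2Packing G S) (hF : F ⊆ G.edgeSet) {e : F}
    (heS : ∀ v ∈ e.val, v ∉ S) (heF : ∀ v ∈ e.val, ∀ s ∈ S, G.Adj v s → s(v, s) ∈ F) :
    Is2Packing (subdivide G F) (insert (Sum.inr e) (Sum.inl '' S)) := by
  rw [is2Packing_iff_pairwiseDisjoint]
  refine (is2Packing_iff_pairwiseDisjoint.1 (hS.image_inl_subdivide hF)).insert ?_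
  rintro _ ⟨s, hs, rfl⟩ -
  refine Set.disjoint_left.2 ?_
  rintro (v | f) hve hvs <;>
    simp only [mem_ball_two, reduceCtorEq, Sum.inl.injEq, Sum.inr.injEq, false_or, or_false,
      subdivide_adj_inr_inl, subdivide_adj_inl_inl, subdivide_adj_inl_inr,
      not_subdivide_adj_inr_inr] at hve hvs
  · obtain rfl | ⟨hsv, hsvF⟩ := hvs
    · exact heS v hve hs
    · exact hsvF (Sym2.eq_swap ▸ heF v hve s hs hsv.symm)
  · exact heS s (hve ▸ hvs) hs

/-- The edge `yz` together with all edges joining `y` or `z` to a vertex of `S`. -/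
def packingEdges (G : SimpleGraph V) (S : Set V) (y z : V) : Set (Sym2 V) :=
  insert s(y, z) ((s(y, ·)) '' (S ∩ G.neighborSet y) ∪ (s(z, ·)) '' (S ∩ G.neighborSet z))

lemma packingEdges_subset (hyz : G.Adj y z) : packingEdges G S y z ⊆ G.edgeSet := by
  rintro _ (rfl | ⟨s, hs, rfl⟩ | ⟨s, hs, rfl⟩)
  exacts [hyz, hs.2, hs.2]

lemma ncard_packingEdges_le [Finite V] : (packingEdges G S y z).ncard ≤
    (S ∩ G.neighborSet y).ncard + (S ∩ G.neighborSet z).ncard + 1 :=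
  (Set.ncard_insert_le _ _).trans <| Nat.add_le_add_right ((Set.ncard_union_le _ _).trans <|
    add_le_add (Set.ncard_image_le (Set.toFinite _)) (Set.ncard_image_le (Set.toFinite _))) 1

lemma Is2Packing.lt_dominationNumber_subdivide [Finite V] (hS : Is2Packing G S)
    (hyz : G.Adj y z) (hy : y ∉ S) (hz : z ∉ S) :
    S.ncard < dominationNumber (subdivide G (packingEdges G S y z)) := by
  have hpack : Is2Packing (subdivide G (packingEdges G S y z))
      (insert (Sum.inr ⟨s(y, z), .inl rfl⟩) (Sum.inl '' S)) := by
    refine hS.insert_inr_subdivide (packingEdges_subset hyz) ?_ ?_ <;>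
      simp only [Sym2.mem_iff, forall_eq_or_imp, forall_eq]
    · exact ⟨hy, hz⟩
    · exact ⟨fun s hs h => .inr (.inl ⟨s, ⟨hs, h⟩, rfl⟩),
        fun s hs h => .inr (.inr ⟨s, ⟨hs, h⟩, rfl⟩)⟩
  have hcard := hpack.ncard_le_dominationNumber
  rwa [Set.ncard_insert_of_notMem (by simp),
    Set.ncard_image_of_injective _ Sum.inl_injective] at hcard

lemma Is2Packing.sd_le [Finite V] (hS : Is2Packing G S) (hcard : S.ncard = dominationNumber G)
    (hyz : G.Adj y z) (hy : y ∉ S) (hz : z ∉ S) :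
    sd G ≤ (S ∩ G.neighborSet y).ncard + (S ∩ G.neighborSet z).ncard + 1 :=
  (sd_le_ncard (packingEdges_subset hyz)
    (hcard ▸ hS.lt_dominationNumber_subdivide hyz hy hz)).trans ncard_packingEdges_le

lemma Is2Packing.ncard_inter_neighborSet_le_one [Finite V] (hS : Is2Packing G S) (y : V) :
    (S ∩ G.neighborSet y).ncard ≤ 1 :=
  Set.ncard_le_one_iff_subsingleton.2 fun _ hs _ ht =>
    hS.eq_of_adj hs.1 ht.1 hs.2.symm ht.2.symm

lemma Is2Packing.isDominating_of_three_le_sd [Finite V] (hS : Is2Packing G S)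
    (hcard : S.ncard = dominationNumber G) (hG : ∀ v, ∃ w, G.Adj v w) (h3 : 3 ≤ sd G) :
    IsDominating G S := by
  intro y hy
  by_contra! hyS
  obtain ⟨z, hyz⟩ := hG y
  have hempty : S ∩ G.neighborSet y = ∅ :=
    Set.eq_empty_of_forall_notMem fun s hs => hyS s hs.1 hs.2
  have hle := hS.sd_le hcard hyz hy fun hz => hyS z hz hyz
  rw [hempty, Set.ncard_empty] at hle
  have := hS.ncard_inter_neighborSet_le_one z
  lia

lemma IsCoronaCode.sd_le_three [Finite V] (hE : IsCoronaCode G E) (hx : x ∉ E) : sd G ≤ 3 := by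
  obtain ⟨y, hy, hxy⟩ := hE.exists_adj_notMem x hx
  have hle := hE.is2Packing.sd_le hE.ncard_eq hxy hx hy
  have := hE.is2Packing.ncard_inter_neighborSet_le_one x
  have := hE.is2Packing.ncard_inter_neighborSet_le_one y
  lia

lemma Is2Packing.insert_sdiff_singleton (hS : Is2Packing G S) (hs : s ∈ S)
    (hx : G.ball x 2 ⊆ G.ball s 2) : Is2Packing G (insert x (S \ {s})) := by
  rw [is2Packing_iff_pairwiseDisjoint] at hS ⊢
  exact (hS.subset Set.sdiff_subset).insert fun t ht _ =>
    (hS hs ht.1 (Ne.symm ht.2)).mono_left hx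

lemma IsPerfectCode.ball_subset_ball (hE : IsPerfectCode G E) (hs : s ∈ E)
    (hx : IsDominating G (insert x (E \ {s}))) : G.ball s 2 ⊆ G.ball x 2 := by
  intro v hv
  obtain ⟨t, rfl | ht, hvt⟩ := isDominating_iff.1 hx v
  · exact hvt
  · exact absurd (hE.is2Packing.eq_of_mem_ball ht.1 hs hvt hv) ht.2

lemma eq_univ_of_forall_adj_mem {A : Set V} (hG : G.Preconnected) (hA : A.Nonempty)
    (h : ∀ u ∈ A, ∀ v, G.Adj u v → v ∈ A) : A = Set.univ := by
  obtain ⟨u, hu⟩ := hA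
  refine Set.eq_univ_of_forall fun v => by_contra fun hv => ?_
  obtain ⟨p⟩ := hG u v
  obtain ⟨d, -, hd, hd'⟩ := p.exists_boundary_dart A hu hv
  exact hd' (h _ hd _ d.adj)

-- If all neighbors of `x ∉ E` lie in `E`, then `x` is a leaf at some `s ∈ E`. Exchanging `s` for
-- `x` gives another dominating packing, so `N[s] ⊆ N[x]` and `{x, s}` is the whole graph.
lemma IsPerfectCode.isCoronaCode (hE : IsPerfectCode G E)
    (hmax : ∀ S, Is2Packing G S → S.ncard = E.ncard → IsDominating G S)
    (hG : G.Preconnected) (h3 : 3 ≤ Nat.card V) : IsCoronaCode G E := by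
  refine ⟨hE, fun x hx => ?_⟩
  by_contra! hxE
  obtain ⟨s, hs, hxs⟩ := hE.isDominating x hx
  have hball : G.ball x 2 ⊆ {x, s} := by
    intro v hv
    obtain rfl | hxv := mem_ball_two.1 hv
    · exact .inl rfl
    · have hvE : v ∈ E := by_contra fun hvE => hxE v hvE hxv
      exact .inr (hE.is2Packing.eq_of_adj hvE hs hxv.symm hxs.symm)
  have hpair : {x, s} ⊆ G.ball s 2 :=
    Set.pair_subset (mem_ball_two.2 (.inr hxs.symm)) (mem_ball_two.2 (.inl rfl))
  have hswap := hmax _ (hE.is2Packing.insert_sdiff_singleton hs (hball.trans hpair))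
    (Set.ncard_exchange hx hs)
  have hball' : G.ball s 2 ⊆ {x, s} := (hE.ball_subset_ball hs hswap).trans hball
  have huniv : ({x, s} : Set V) = Set.univ := by
    refine eq_univ_of_forall_adj_mem hG ⟨x, .inl rfl⟩ ?_
    rintro u (rfl | rfl) v huv
    exacts [hball (mem_ball_two.2 (.inr huv)), hball' (mem_ball_two.2 (.inr huv))]
  have := Set.ncard_pair hxs.ne
  rw [huniv, Set.ncard_univ] at this
  lia

lemma Is2Packing.isCoronaCode_of_three_le_sd (hS : Is2Packing G S)
    (hcard : S.ncard = dominationNumber G) (hG : G.Preconnected) (h3 : 3 ≤ Nat.card V)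
    (hsd : 3 ≤ sd G) : IsCoronaCode G S := by
  have : Finite V := Nat.finite_of_card_ne_zero (by lia)
  have : Nontrivial V := Finite.one_lt_card_iff_nontrivial.1 (by lia)
  have hmax (S' : Set V) (hS' : Is2Packing G S') (hcard' : S'.ncard = S.ncard) :
      IsDominating G S' :=
    hS'.isDominating_of_three_le_sd (hcard'.trans hcard) hG.exists_adj_of_nontrivial hsd
  exact (IsPerfectCode.mk hS (hmax S hS rfl)).isCoronaCode hmax hG h3

end UpperBound

section ParentMap

variable {T : SimpleGraph V} {π : V → V} {depth : V → ℕ}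

/-- `π` sends every vertex of a rooted forest `T` to its parent and fixes the roots, and `depth`
is a height function increasing by one from parents to children. -/
structure IsParentMap (T : SimpleGraph V) (π : V → V) (depth : V → ℕ) : Prop where
  adj_of_ne {x : V} : π x ≠ x → T.Adj x (π x)
  depth_eq_of_ne {x : V} : π x ≠ x → depth x = depth (π x) + 1
  eq_or_eq_of_adj {x y : V} : T.Adj x y → π x = y ∨ π y = x

lemma exists_isParentMap_dist (hT : T.IsTree) (r : V) :
    ∃ π, π r = r ∧ IsParentMap T π (T.dist r) := by
  choose p hp using hT.connected.exists_walk_length_eq_dist r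
  have hpath (x : V) : (p x).IsPath := Walk.isPath_of_length_eq_dist _ (hp x)
  have hroot : p r = .nil := Walk.eq_nil_iff_nil.2 (Walk.length_eq_zero_iff.1 (by simp [hp]))
  have hnil {x : V} (hx : (p x).penultimate ≠ x) : ¬(p x).Nil := by
    refine Walk.not_nil_of_ne ?_
    rintro rfl
    exact hx (by rw [hroot, Walk.penultimate_nil])
  have hconcat {x y : V} (hyx : T.Adj y x) (h : T.dist r x = T.dist r y + 1) :
      (p x).penultimate = y := by
    have hq : ((p y).concat hyx).IsPath :=
      Walk.isPath_of_length_eq_dist _ (by rw [Walk.length_concat, hp, h])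
    rw [(hT.existsUnique_path r x).unique (hpath x) hq, Walk.penultimate_concat]
  refine ⟨fun x => (p x).penultimate, ?_, ?_, ?_, ?_⟩
  · simp only [hroot, Walk.penultimate_nil]
  · exact fun hx => ((p _).adj_penultimate (hnil hx)).symm
  · intro x hx
    have hle : T.dist r (p x).penultimate ≤ (p x).dropLast.length := dist_le _
    have := (p x).length_dropLast_add_one (hnil hx)
    have := hp x
    have := hT.dist_eq_dist_add_one_of_adj r ((p x).adj_penultimate (hnil hx))
    lia
  · intro x y hxy
    exact (hT.dist_eq_dist_add_one_of_adj r hxy).imp (hconcat hxy.symm) (hconcat hxy)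

lemma IsParentMap.self_mem_ball_parent (hπ : IsParentMap T π depth) (u : V) :
    u ∈ T.ball (π u) 2 :=
  mem_ball_two.2 (or_iff_not_imp_left.2 fun hu => (hπ.adj_of_ne (Ne.symm hu)).symm)

lemma IsParentMap.depth_lt_of_adj (hπ : IsParentMap T π depth) {x : V} (hx : T.Adj x (π x)) :
    depth (π x) < depth x := by
  have := hπ.depth_eq_of_ne hx.ne'
  lia

lemma IsParentMap.mem_ball_parent (hπ : IsParentMap T π depth) {s u x : V}
    (hxu : x ∈ T.ball u 2) (hxs : x ∈ T.ball s 2) (hsu : depth s ≤ depth u) :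
    s ∈ T.ball (π u) 2 := by
  have hu := hπ.self_mem_ball_parent u
  obtain rfl | hux := mem_ball_two.1 hxu
  · obtain rfl | hsx := mem_ball_two.1 hxs
    · exact hu
    obtain rfl | rfl := hπ.eq_or_eq_of_adj hsx
    · exact absurd (hπ.depth_lt_of_adj hsx) hsu.not_gt
    · exact mem_ball_self (by simp)
  obtain rfl | rfl := hπ.eq_or_eq_of_adj hux
  · exact mem_ball_comm.1 hxs
  have hlt := hπ.depth_lt_of_adj hux.symm
  obtain rfl | hsx := mem_ball_two.1 hxs
  · exact absurd hlt hsu.not_gt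
  obtain rfl | rfl := hπ.eq_or_eq_of_adj hsx
  · exact absurd (hlt.trans (hπ.depth_lt_of_adj hsx)) hsu.not_gt
  · exact hu

lemma IsParentMap.exists_dominating_is2Packing [Finite V] (hπ : IsParentMap T π depth)
    (U : Set V) : ∃ D S : Set V, S ⊆ U ∧ Is2Packing T S ∧ (∀ u ∈ U, ∃ d ∈ D, u ∈ T.ball d 2) ∧
      D.ncard ≤ S.ncard := by
  induction U using WellFoundedLT.induction with
  | ind U ih =>
    obtain rfl | hne := U.eq_empty_or_nonempty
    · exact ⟨∅, ∅, subset_rfl, by simp [Is2Packing], by simp, le_rfl⟩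
    obtain ⟨u, hu, hmax⟩ := U.exists_max_image depth U.toFinite hne
    have huU' : u ∉ U \ T.ball (π u) 2 := fun h => h.2 (hπ.self_mem_ball_parent u)
    obtain ⟨D, S, hSU, hS, hD, hcard⟩ :=
      ih _ (LE.le.ssubset_of_mem_notMem Set.sdiff_subset hu huU')
    refine ⟨insert (π u) D, insert u S, ?_, ?_, ?_, ?_⟩
    · exact Set.insert_subset hu (hSU.trans Set.sdiff_subset)
    · rw [is2Packing_iff_pairwiseDisjoint] at hS ⊢
      refine hS.insert fun s hs _ => Set.disjoint_left.2 fun x hxu hxs => ?_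
      exact (hSU hs).2 (hπ.mem_ball_parent hxu hxs (hmax s (hSU hs).1))
    · intro v hv
      by_cases hvu : v ∈ T.ball (π u) 2
      · exact ⟨π u, .inl rfl, hvu⟩
      · obtain ⟨d, hd, hvd⟩ := hD v ⟨hv, hvu⟩
        exact ⟨d, .inr hd, hvd⟩
    · rw [Set.ncard_insert_of_notMem fun h => huU' (hSU h)]
      exact (Set.ncard_insert_le _ _).trans (Nat.add_le_add_right hcard 1)

lemma IsParentMap.exists_is2Packing_ncard_eq [Finite V] (hπ : IsParentMap T π depth) :
    ∃ S, Is2Packing T S ∧ S.ncard = dominationNumber T := by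
  obtain ⟨D, S, -, hS, hD, hcard⟩ := hπ.exists_dominating_is2Packing Set.univ
  refine ⟨S, hS, hS.ncard_le_dominationNumber.antisymm ?_⟩
  exact (dominationNumber_le (isDominating_iff.2 fun v => hD v trivial)).trans hcard

/-- The vertices for which the path to the root of their tree traverses an edge of `F`. -/
def below (π : V → V) (F : Set (Sym2 V)) : Set V :=
  {x | ∃ k, s(π^[k] x, π (π^[k] x)) ∈ F}

lemma mem_below_iff {F : Set (Sym2 V)} {x : V} :
    x ∈ below π F ↔ s(x, π x) ∈ F ∨ π x ∈ below π F := by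
  simp only [below, Set.mem_ofPred_eq]
  rw [← Nat.or_exists_add_one]
  simp only [Function.iterate_zero_apply, Function.iterate_succ_apply]

lemma IsParentMap.dist_iterate_add_depth_le (hπ : IsParentMap T π depth) (x : V) (k : ℕ) :
    T.dist (π^[k] x) x + depth (π^[k] x) ≤ depth x := by
  induction k with
  | zero => simp
  | succ k ih =>
    rw [Function.iterate_succ_apply']
    by_cases hk : π (π^[k] x) = π^[k] x
    · rwa [hk]
    · have hdepth := hπ.depth_eq_of_ne hk
      have hdist := (hπ.adj_of_ne hk).diff_dist_adj (u := x)
      rw [dist_comm] at ih ⊢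
      lia

-- Root `T` at the end `u` of the edge `uv` for which the second edge `f` lies on the side of `u`:
-- then `f` is not below `v`, and `uv` is not below `f`, as it ends in the root.
lemma exists_isParentMap_parent_notMem_below {F : Set (Sym2 V)} (hT : T.IsTree)
    (hF : F ⊆ T.edgeSet) {e f : Sym2 V} (hef : F ⊆ {e, f}) :
    ∃ π depth, IsParentMap T π depth ∧ ∀ x, s(x, π x) ∈ F → π x ∉ below π F := by
  induction e with | h u v
  induction f with | h a b
  wlog huv : T.dist u a ≤ T.dist v a generalizing u v
  · exact this v u (Sym2.eq_swap (a := u) ▸ hef) (le_of_not_ge huv)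
  obtain ⟨π, hroot, hπ⟩ := exists_isParentMap_dist hT u
  refine ⟨π, _, hπ, ?_⟩
  rintro x hx ⟨k, hk⟩
  have hloop : ¬T.Adj u (π u) := by simp [hroot]
  have hxπ : T.Adj x (π x) := hF hx
  have hyπ : T.Adj (π^[k] (π x)) (π (π^[k] (π x))) := hF hk
  have hdist := hπ.dist_iterate_add_depth_le (π x) k
  have hdist' := hπ.dist_iterate_add_depth_le x (k + 1)
  rw [Function.iterate_succ_apply] at hdist'
  have hlt := hπ.depth_lt_of_adj hxπ
  have hlt' := hπ.depth_lt_of_adj hyπ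
  obtain hx | hx := hef hx
  · obtain ⟨rfl, -⟩ | ⟨-, hxu⟩ := Sym2.eq_iff.1 hx
    · exact hloop hxπ
    · rw [hxu, Function.iterate_fixed hroot] at hyπ
      exact hloop hyπ
  obtain hk | hk := hef hk
  · obtain ⟨hy, -⟩ | ⟨hy, -⟩ := Sym2.eq_iff.1 hk
    · rw [hy] at hyπ
      exact hloop hyπ
    · rw [hy] at hdist hdist' hlt'
      obtain ⟨rfl, -⟩ | ⟨-, rfl⟩ := Sym2.eq_iff.1 hx <;> lia
  · obtain ⟨hxy, -⟩ | ⟨hxy, -⟩ := Sym2.eq_iff.1 (hx.trans hk.symm)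
    · rw [← hxy] at hdist
      lia
    · rw [hxy] at hlt
      lia

variable {F : Set (Sym2 V)} {E : Set V}

open Classical in
/-- Moves a vertex `x` one step towards the root when `x` is below `F`; when the first edge of this
step is subdivided, the vertex lands on the subdivision vertex. -/
noncomputable def shift (π : V → V) (F : Set (Sym2 V)) (x : V) : V ⊕ F :=
  if h : s(x, π x) ∈ F then Sum.inr ⟨_, h⟩
  else if π x ∈ below π F then Sum.inl (π x) else Sum.inl x

lemma shift_of_mem {x : V} (hx : s(x, π x) ∈ F) : shift π F x = Sum.inr ⟨_, hx⟩ :=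
  dif_pos hx

lemma shift_of_notMem_below {x : V} (hx : x ∉ below π F) : shift π F x = Sum.inl x := by
  rw [mem_below_iff, not_or] at hx
  rw [shift, dif_neg hx.1, if_neg hx.2]

lemma shift_eq_inl_parent (hF : ∀ x, s(x, π x) ∈ F → π x ∉ below π F) {x : V}
    (hπx : π x ∈ below π F) : shift π F x = Sum.inl (π x) := by
  rw [shift, dif_neg fun h => hF x h hπx, if_pos hπx]

lemma IsParentMap.inl_mem_ball_shift (hπ : IsParentMap T π depth) {d x : V}
    (hxd : x ∈ T.ball d 2) (hx : x ∉ below π F) :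
    Sum.inl x ∈ (subdivide T F).ball (shift π F d) 2 := by
  have hx' := not_or.1 (mem_below_iff.not.1 hx)
  obtain rfl | hdx := mem_ball_two.1 hxd
  · exact shift_of_notMem_below hx ▸ mem_ball_self (by simp)
  obtain rfl | rfl := hπ.eq_or_eq_of_adj hdx
  · by_cases hdF : s(d, π d) ∈ F
    · simp [shift_of_mem hdF]
    · have hd : d ∉ below π F := fun h => (mem_below_iff.1 h).elim hdF hx
      simp [shift_of_notMem_below hd, hdx, hdF]
  · simp [shift_of_notMem_below hx'.2, hdx, Sym2.eq_swap (a := π x), hx'.1]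

-- If `x` is dominated only by its parent, then it has a child `y ∉ E`. The dominator of `y` is
-- again a child of `y`, hence moves to `y`.
lemma IsParentMap.exists_inl_mem_ball_shift (hπ : IsParentMap T π depth)
    (hF : ∀ x, s(x, π x) ∈ F → π x ∉ below π F) (hE : IsCoronaCode T E) {x : V}
    (hx : x ∈ below π F) : ∃ d ∈ E, Sum.inl x ∈ (subdivide T F).ball (shift π F d) 2 := by
  by_cases hxE : x ∈ E
  · refine ⟨x, hxE, ?_⟩
    by_cases hxF : s(x, π x) ∈ F
    · simp [shift_of_mem hxF]
    have hπx := (mem_below_iff.1 hx).resolve_left hxF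
    rw [shift_eq_inl_parent hF hπx, mem_ball_two]
    by_cases hroot : π x = x
    · simp [hroot]
    · simp [(hπ.adj_of_ne hroot).symm, Sym2.eq_swap (a := π x), hxF]
  obtain ⟨d, hd, hxd⟩ := hE.isDominating x hxE
  obtain rfl | rfl := (hπ.eq_or_eq_of_adj hxd).symm
  · exact ⟨d, hd, shift_eq_inl_parent hF hx ▸ mem_ball_self (by simp)⟩
  obtain ⟨y, hyE, hxy⟩ := hE.exists_adj_notMem x hxE
  obtain rfl | rfl := hπ.eq_or_eq_of_adj hxy
  · contradiction
  obtain ⟨d, hdE, hyd⟩ := hE.isDominating y hyE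
  obtain rfl | rfl := hπ.eq_or_eq_of_adj hyd
  · contradiction
  have hy : π d ∈ below π F := mem_below_iff.2 (.inr hx)
  refine ⟨d, hdE, ?_⟩
  rw [shift_eq_inl_parent hF hy, mem_ball_two]
  exact .inr (subdivide_adj_inl_inl.2 ⟨hxy.symm, fun h => hF _ h hx⟩)

lemma IsParentMap.inr_mem_ball_shift (hπ : IsParentMap T π depth)
    (hF : ∀ x, s(x, π x) ∈ F → π x ∉ below π F) {d x : V} (hxd : x ∈ T.ball d 2)
    (hx : s(x, π x) ∈ F) : Sum.inr ⟨_, hx⟩ ∈ (subdivide T F).ball (shift π F d) 2 := by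
  obtain rfl | hdx := mem_ball_two.1 hxd
  · simp [shift_of_mem hx]
  obtain rfl | rfl := hπ.eq_or_eq_of_adj hdx
  · simp [shift_eq_inl_parent hF (mem_below_iff.2 (.inl hx))]
  · simp [shift_of_notMem_below (hF x hx)]

lemma IsParentMap.isDominating_image_shift (hπ : IsParentMap T π depth) (hFT : F ⊆ T.edgeSet)
    (hF : ∀ x, s(x, π x) ∈ F → π x ∉ below π F) (hE : IsCoronaCode T E) :
    IsDominating (subdivide T F) (shift π F '' E) := by
  rw [isDominating_iff]
  simp only [Set.exists_mem_image]
  have hdom := isDominating_iff.1 hE.isDominating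
  rintro (x | ⟨f, hf⟩)
  · by_cases hx : x ∈ below π F
    · exact hπ.exists_inl_mem_ball_shift hF hE hx
    · exact (hdom x).imp fun d hd => ⟨hd.1, hπ.inl_mem_ball_shift hd.2 hx⟩
  · obtain ⟨x, rfl⟩ : ∃ x, f = s(x, π x) := by
      induction f with | h a b
      have hab : T.Adj a b := hFT hf
      obtain rfl | rfl := hπ.eq_or_eq_of_adj hab
      exacts [⟨a, rfl⟩, ⟨b, Sym2.eq_swap⟩]
    exact (hdom x).imp fun d hd => ⟨hd.1, hπ.inr_mem_ball_shift hF hd.2 hf⟩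

end ParentMap

section LowerBound

variable {T : SimpleGraph V} {E : Set V} {F : Set (Sym2 V)}

lemma IsCoronaCode.dominationNumber_subdivide_le [Finite V] (hE : IsCoronaCode T E)
    (hT : T.IsTree) (hF : F ⊆ T.edgeSet) (hcard : F.ncard ≤ 2) :
    dominationNumber (subdivide T F) ≤ dominationNumber T := by
  obtain ⟨e, f, hef⟩ : ∃ e f, F ⊆ {e, f} := by
    obtain hlt | hcard := hcard.lt_or_eq
    · have : Nonempty (Sym2 V) := hT.nonempty.map Sym2.diag
      obtain ⟨e, he⟩ := (Set.ncard_le_one_iff_subset_singleton).1 (Nat.le_of_lt_succ hlt)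
      exact ⟨e, e, by simpa using he⟩
    · obtain ⟨e, f, -, rfl⟩ := Set.ncard_eq_two.1 hcard
      exact ⟨e, f, subset_rfl⟩
  obtain ⟨π, depth, hπ, hbelow⟩ := exists_isParentMap_parent_notMem_below hT hF hef
  calc dominationNumber (subdivide T F) ≤ (shift π F '' E).ncard :=
        dominationNumber_le (hπ.isDominating_image_shift hF hbelow hE)
    _ ≤ E.ncard := Set.ncard_image_le
    _ = dominationNumber T := hE.ncard_eq

lemma IsCoronaCode.sd_eq_three [Finite V] [Nontrivial V] (hE : IsCoronaCode T E)
    (hT : T.IsTree) : sd T = 3 := by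
  obtain ⟨x, hx⟩ : ∃ x, x ∉ E := by
    by_contra! h
    obtain ⟨w, hw⟩ := hT.preconnected.exists_adj_of_nontrivial (Classical.arbitrary V)
    exact hE.is2Packing.not_adj (h _) (h w) hw
  refine (hE.sd_le_three hx).antisymm (le_sd ?_ ?_)
  · obtain ⟨y, hy, hxy⟩ := hE.exists_adj_notMem x hx
    exact ⟨_, packingEdges_subset hxy,
      hE.ncard_eq ▸ hE.is2Packing.lt_dominationNumber_subdivide hxy hx hy⟩
  · intro F hF hlt
    by_contra! hcard
    exact hlt.not_ge (hE.dominationNumber_subdivide_le hT hF (Nat.le_of_lt_succ hcard))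

end LowerBound

section Contraction

variable {ι : Type*} {G : SimpleGraph V} {c : V → ι}

lemma connected_map_of_surjective (hG : G.Connected) (hc : Function.Surjective c) :
    (G.map c).Connected := by
  have := hG.nonempty.map c
  refine ⟨hc.forall₂.2 fun x y => ?_⟩
  have hxy := hG x y
  rw [reachable_iff_reflTransGen] at hxy ⊢
  refine hxy.lift' c fun u v huv => ?_
  by_cases h : c u = c v
  · rw [Function.onFun_apply, h]
  · exact .single (map_adj_apply' huv h)

-- The edges within a fiber survive the deletion, hence so do the connections within it.
lemma reachable_deleteEdges_of_apply_eq (hc : ∀ i, (G.induce (c ⁻¹' {i})).Preconnected)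
    {u v x y : V} (huv : c u ≠ c v) (hxy : c x = c y) :
    (G.deleteEdges {s(u, v)}).Reachable x y := by
  let φ : G.induce (c ⁻¹' {c y}) →g G.deleteEdges {s(u, v)} :=
    { toFun := Subtype.val
      map_rel' := fun {a b} hab => by
        refine deleteEdges_adj.2 ⟨hab, fun h => huv ?_⟩
        have ha : c a = c y := a.2
        have hb : c b = c y := b.2
        obtain ⟨rfl, rfl⟩ | ⟨rfl, rfl⟩ := Sym2.eq_iff.1 h
        exacts [ha.trans hb.symm, hb.trans ha.symm] }
  exact (hc (c y) ⟨x, hxy⟩ ⟨y, rfl⟩).map φ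

lemma isAcyclic_map (hG : G.IsAcyclic)
    (hc : ∀ i, (G.induce (c ⁻¹' {i})).Preconnected) : (G.map c).IsAcyclic := by
  rw [isAcyclic_iff_forall_adj_isBridge] at hG ⊢
  rintro _ _ ⟨huv, u, v, hadj, rfl, rfl⟩ ⟨p⟩
  suffices hlift : ∀ {i j : ι}, ((G.map c).deleteEdges {s(c u, c v)}).Walk i j →
      ∀ x y : V, c x = i → c y = j → (G.deleteEdges {s(u, v)}).Reachable x y from
    hG hadj (hlift p u v rfl rfl)
  intro i j p
  induction p with
  | nil => exact fun x y hx hy => reachable_deleteEdges_of_apply_eq hc huv (hx.trans hy.symm)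
  | cons h p ih =>
    intro x y hx hy
    obtain ⟨⟨-, a, b, hab, rfl, rfl⟩, hne⟩ := deleteEdges_adj.1 h
    have hab' : (G.deleteEdges {s(u, v)}).Adj a b :=
      deleteEdges_adj.2 ⟨hab, fun h => hne (congrArg (Sym2.map c) h)⟩
    exact (reachable_deleteEdges_of_apply_eq hc huv hx).trans
      (hab'.reachable.trans (ih b y rfl hy))

lemma eq_and_eq_of_adj_of_apply_eq (hG : G.IsAcyclic)
    (hc : ∀ i, (G.induce (c ⁻¹' {i})).Preconnected) {x y x' y' : V} (hxy : G.Adj x y)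
    (hxy' : G.Adj x' y') (hx : c x = c x') (hy : c y = c y') (hne : c x ≠ c y) :
    x = x' ∧ y = y' := by
  by_contra hcon
  refine isAcyclic_iff_forall_adj_isBridge.1 hG hxy ?_
  have hadj : (G.deleteEdges {s(x, y)}).Adj x' y' := by
    refine deleteEdges_adj.2 ⟨hxy', fun h => ?_⟩
    obtain ⟨rfl, rfl⟩ | ⟨rfl, rfl⟩ := Sym2.eq_iff.1 h
    exacts [hcon ⟨rfl, rfl⟩, hne hx]
  exact (reachable_deleteEdges_of_apply_eq hc hne hx).trans
    (hadj.reachable.trans (reachable_deleteEdges_of_apply_eq hc hne hy.symm))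

end Contraction

section CodeIndexing

/-- An indexing `e` of a corona code, together with the map `c` sending every vertex to the index
of its dominator in the code. -/
structure IsCodeIndexing {ι : Type*} (G : SimpleGraph V) (e : ι → V) (c : V → ι) : Prop where
  apply_eq_iff {x : V} {i : ι} : c x = i ↔ x ∈ G.ball (e i) 2
  exists_adj_notMem : ∀ x ∉ Set.range e, ∃ y ∉ Set.range e, G.Adj x y

lemma IsCoronaCode.exists_isCodeIndexing [Finite V] {G : SimpleGraph V} {E : Set V}
    (hE : IsCoronaCode G E) : ∃ (n : ℕ) (e : Fin n → V) (c : V → Fin n), IsCodeIndexing G e c := by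
  obtain ⟨n, ⟨φ⟩⟩ := Finite.exists_equiv_fin E
  choose d hdE hd using isDominating_iff.1 hE.isDominating
  have hrange : Set.range (fun i => (φ.symm i : V)) = E := by
    rw [Set.range_comp' Subtype.val φ.symm]
    simp
  refine ⟨n, fun i => φ.symm i, fun x => φ ⟨d x, hdE x⟩, fun {x i} => ?_, ?_⟩
  · rw [← φ.eq_symm_apply]
    refine ⟨fun h => h ▸ hd x, fun h => Subtype.ext ?_⟩
    exact hE.is2Packing.eq_of_mem_ball (hdE x) (φ.symm i).2 (hd x) h
  · rw [hrange]
    exact hE.exists_adj_notMem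

/-- The indices of the fibers of `c`, other than the fiber of `x`, that contain a neighbor
of `x`. -/
def nbrFibers {ι : Type*} (G : SimpleGraph V) (c : V → ι) (x : V) : Set ι :=
  c '' G.neighborSet x \ {c x}

namespace IsCodeIndexing

variable {ι : Type*} {T : SimpleGraph V} {e : ι → V} {c : V → ι}

lemma apply_code (h : IsCodeIndexing T e c) (i : ι) : c (e i) = i :=
  h.apply_eq_iff.2 (mem_ball_self (by simp))

lemma injective (h : IsCodeIndexing T e c) : Function.Injective e :=
  Function.LeftInverse.injective h.apply_code

lemma adj_code (h : IsCodeIndexing T e c) {x : V} (hx : x ∉ Set.range e) : T.Adj (e (c x)) x :=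
  (mem_ball_two.1 (h.apply_eq_iff.1 rfl)).resolve_left fun hxe => hx ⟨_, hxe.symm⟩

lemma adj_code_iff (h : IsCodeIndexing T e c) {x : V} (hx : x ∉ Set.range e) {i : ι} :
    T.Adj (e i) x ↔ i = c x :=
  ⟨fun hix => (h.apply_eq_iff.2 (mem_ball_two.2 (.inr hix))).symm, fun hi => hi ▸ h.adj_code hx⟩

lemma not_adj (h : IsCodeIndexing T e c) (i j : ι) : ¬T.Adj (e i) (e j) := by
  intro hij
  have hc := h.apply_eq_iff.2 (mem_ball_two.2 (.inr hij))
  rw [h.apply_code] at hc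
  exact hij.ne (congrArg e hc.symm)

lemma notMem_range_of_adj (h : IsCodeIndexing T e c) {x y : V} (hxy : T.Adj x y)
    (hc : c x ≠ c y) : x ∉ Set.range e := by
  rintro ⟨i, rfl⟩
  exact hc ((h.apply_code i).trans (h.apply_eq_iff.2 (mem_ball_two.2 (.inr hxy))).symm)

lemma preconnected_induce_fiber (h : IsCodeIndexing T e c) (i : ι) :
    (T.induce (c ⁻¹' {i})).Preconnected := by
  have hcenter (x : c ⁻¹' {i}) :
      (T.induce (c ⁻¹' {i})).Reachable ⟨e i, h.apply_code i⟩ x := by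
    obtain hx | hx := mem_ball_two.1 (h.apply_eq_iff.1 x.2)
    · rw [Subtype.ext (a1 := ⟨e i, h.apply_code i⟩) hx.symm]
    · exact Adj.reachable (G := T.induce _) hx
  exact fun x y => (hcenter x).symm.trans (hcenter y)

lemma isTree_map (h : IsCodeIndexing T e c) (hT : T.IsTree) : (T.map c).IsTree where
  connected := connected_map_of_surjective hT.connected fun i => ⟨e i, h.apply_code i⟩
  isAcyclic := isAcyclic_map hT.isAcyclic h.preconnected_induce_fiber

-- Two adjacent vertices of the same fiber would form a triangle with the code vertex of the fiber.
lemma apply_ne_of_adj (h : IsCodeIndexing T e c) (hT : T.IsAcyclic) {x y : V}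
    (hx : x ∉ Set.range e) (hy : y ∉ Set.range e) (hxy : T.Adj x y) : c x ≠ c y := by
  classical
  intro hc
  exact hT.cliqueFree le_rfl {e (c x), x, y}
    (is3Clique_triple_iff.2 ⟨h.adj_code hx, hc ▸ h.adj_code hy, hxy⟩)

lemma nbrFibers_nonempty (h : IsCodeIndexing T e c) (hT : T.IsAcyclic) {x : V}
    (hx : x ∉ Set.range e) : (nbrFibers T c x).Nonempty := by
  obtain ⟨y, hy, hxy⟩ := h.exists_adj_notMem x hx
  exact ⟨c y, ⟨y, hxy, rfl⟩, (h.apply_ne_of_adj hT hx hy hxy).symm⟩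

lemma eq_of_nbrFibers_inter_nonempty (h : IsCodeIndexing T e c) (hT : T.IsAcyclic) {x y : V}
    (hc : c x = c y) (hne : (nbrFibers T c x ∩ nbrFibers T c y).Nonempty) : x = y := by
  obtain ⟨_, ⟨⟨a, hxa, rfl⟩, hca⟩, ⟨⟨b, hyb, hba⟩, -⟩⟩ := hne
  exact (eq_and_eq_of_adj_of_apply_eq hT h.preconnected_induce_fiber hxa hyb hc hba.symm
    (Ne.symm hca)).1

/-- The vertex neighborhood partition of the contraction of the fibers of `c` for which `T` is the
general corona: the parts at `i` correspond to the neighbors of the code vertex `e i`. -/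
def nbhdPartition (h : IsCodeIndexing T e c) (hT : T.IsAcyclic) : NbhdPartition (T.map c) where
  part i := {A | ∃ x ∉ Set.range e, c x = i ∧ nbrFibers T c x = A}
  nonempty := by
    rintro _ _ ⟨x, hx, rfl, rfl⟩
    exact h.nbrFibers_nonempty hT hx
  subset_nbhd := by
    rintro _ _ ⟨x, -, rfl, rfl⟩ _ ⟨⟨y, hxy, rfl⟩, hc⟩
    exact map_adj_apply' hxy (Ne.symm hc)
  covers := by
    rintro _ _ ⟨hc, x, y, hxy, rfl, rfl⟩
    exact ⟨_, ⟨x, h.notMem_range_of_adj hxy hc, rfl, rfl⟩, ⟨y, hxy, rfl⟩, hc.symm⟩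
  eq_of_inter := by
    rintro _ _ ⟨x, -, rfl, rfl⟩ _ ⟨y, -, hc, rfl⟩ hne
    rw [h.eq_of_nbrFibers_inter_nonempty hT hc.symm hne]

/-- The internal vertex of the general corona that represents a given vertex outside the code. -/
noncomputable def internalEquiv (h : IsCodeIndexing T e c) (hT : T.IsAcyclic) :
    ((Set.range e)ᶜ : Set V) ≃ {p : ι × Set ι // p.2 ∈ (h.nbhdPartition hT).part p.1} :=
  Equiv.ofBijective (fun x => ⟨(c x, nbrFibers T c x), x, x.2, rfl, rfl⟩) <| by
    refine ⟨fun x y hxy => Subtype.ext ?_, ?_⟩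
    · obtain ⟨hc, hfib⟩ : c x = c y ∧ nbrFibers T c x = nbrFibers T c y :=
        Prod.mk.inj (congrArg Subtype.val hxy)
      refine h.eq_of_nbrFibers_inter_nonempty hT hc ?_
      rw [← hfib, Set.inter_self]
      exact h.nbrFibers_nonempty hT x.2
    · rintro ⟨p, x, hx, hc, hfib⟩
      exact ⟨⟨x, hx⟩, Subtype.ext (Prod.ext hc hfib)⟩

lemma adj_iff_mem_nbrFibers (h : IsCodeIndexing T e c) (hT : T.IsAcyclic) {x y : V}
    (hx : x ∉ Set.range e) (hy : y ∉ Set.range e) :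
    T.Adj x y ↔ (T.map c).Adj (c x) (c y) ∧ c y ∈ nbrFibers T c x ∧ c x ∈ nbrFibers T c y := by
  constructor
  · intro hxy
    have hc := h.apply_ne_of_adj hT hx hy hxy
    exact ⟨map_adj_apply' hxy hc, ⟨⟨y, hxy, rfl⟩, hc.symm⟩, ⟨x, hxy.symm, rfl⟩, hc⟩
  · rintro ⟨hadj, ⟨⟨b, hxb, hb⟩, -⟩, ⟨⟨a, hya, ha⟩, -⟩⟩
    obtain ⟨-, rfl⟩ := eq_and_eq_of_adj_of_apply_eq hT h.preconnected_induce_fiber hxb hya.symm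
      ha.symm hb (hb ▸ hadj.ne)
    exact hxb

open Classical in
/-- A tree with a corona code is the general corona of the contraction of the closed neighborhoods
of the code vertices, which become the external vertices. -/
noncomputable def coronaIso (h : IsCodeIndexing T e c) (hT : T.IsAcyclic) :
    corona (T.map c) (h.nbhdPartition hT) ≃g T where
  toEquiv := ((Equiv.ofInjective e h.injective).sumCongr (h.internalEquiv hT).symm).trans
    (Equiv.Set.sumCompl (Set.range e))
  map_rel_iff' := by
    rintro (i | p) (j | q)
    · simp [h.not_adj i j]
    · obtain ⟨x, rfl⟩ := (h.internalEquiv hT).surjective q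
      simpa using! h.adj_code_iff x.2
    · obtain ⟨x, rfl⟩ := (h.internalEquiv hT).surjective p
      simpa [T.adj_comm x.1] using! h.adj_code_iff x.2
    · obtain ⟨x, rfl⟩ := (h.internalEquiv hT).surjective p
      obtain ⟨y, rfl⟩ := (h.internalEquiv hT).surjective q
      simpa using! h.adj_iff_mem_nbrFibers hT x.2 y.2

end IsCodeIndexing

end CodeIndexing

section Characterization

lemma isCoronaCode_ext (G : SimpleGraph V) (P : NbhdPartition G) :
    IsCoronaCode (corona G P) (Ext G P) := by
  refine ⟨⟨is2Packing_iff_pairwiseDisjoint.2 ?_, ?_⟩, ?_⟩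
  · rintro _ ⟨u, rfl⟩ _ ⟨v, rfl⟩ huv
    refine Set.disjoint_left.2 ?_
    rintro (w | p) hu hv <;> simp_all
  · rintro (v | p) hp
    · exact absurd ⟨v, rfl⟩ hp
    · exact ⟨_, ⟨p.val.1, rfl⟩, corona_adj_inr_inl.2 rfl⟩
  · rintro (v | ⟨⟨v, A⟩, hA⟩) hp
    · exact absurd ⟨v, rfl⟩ hp
    · obtain ⟨u, hu⟩ := P.nonempty v A hA
      have hvu : G.Adj v u := P.subset_nbhd v A hA hu
      obtain ⟨B, hB, hvB⟩ := P.covers u v hvu.symm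
      exact ⟨Sum.inr ⟨(u, B), hB⟩, by simp [Ext], corona_adj_inr_inr.2 ⟨hvu, hu, hvB⟩⟩

lemma IsCoronaCode.preimage_iso {W : Type*} {G : SimpleGraph V} {H : SimpleGraph W} {E : Set W}
    (hE : IsCoronaCode H E) (f : G ≃g H) : IsCoronaCode G (f ⁻¹' E) := by
  have hball {u v : V} (h : v ∈ G.ball u 2) : f v ∈ H.ball (f u) 2 :=
    mem_ball_two.2 ((mem_ball_two.1 h).imp (congrArg f) f.map_adj_iff.2)
  refine ⟨⟨is2Packing_iff_pairwiseDisjoint.2 ?_, fun x hx => ?_⟩, fun x hx => ?_⟩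
  · intro u hu v hv huv
    refine Set.disjoint_left.2 fun x hxu hxv => huv (f.injective ?_)
    exact hE.is2Packing.eq_of_mem_ball hu hv (hball hxu) (hball hxv)
  · obtain ⟨d, hd, hxd⟩ := hE.isDominating (f x) hx
    obtain ⟨d, rfl⟩ := f.surjective d
    exact ⟨d, hd, f.map_adj_iff.1 hxd⟩
  · obtain ⟨y, hy, hxy⟩ := hE.exists_adj_notMem (f x) hx
    obtain ⟨y, rfl⟩ := f.surjective y
    exact ⟨y, hy, f.map_adj_iff.1 hxy⟩

variable {T : SimpleGraph V}

lemma isGeneralCoronaOfTree_iff_exists_isCoronaCode [Finite V] (hT : T.IsTree) :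
    IsGeneralCoronaOfTree T ↔ ∃ E, IsCoronaCode T E := by
  constructor
  · rintro ⟨n, T', P, -, ⟨f⟩⟩
    exact ⟨_, (isCoronaCode_ext T' P).preimage_iso f⟩
  · rintro ⟨E, hE⟩
    obtain ⟨n, e, c, h⟩ := hE.exists_isCodeIndexing
    exact ⟨n, T.map c, _, h.isTree_map hT, ⟨(h.coronaIso hT.isAcyclic).symm⟩⟩

lemma sd_eq_three_iff_exists_isCoronaCode (hT : T.IsTree) (h3 : 3 ≤ Nat.card V) :
    sd T = 3 ↔ ∃ E, IsCoronaCode T E := by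
  have : Finite V := Nat.finite_of_card_ne_zero (by lia)
  have : Nontrivial V := Finite.one_lt_card_iff_nontrivial.1 (by lia)
  constructor
  · intro hsd
    obtain ⟨r⟩ := hT.nonempty
    obtain ⟨π, -, hπ⟩ := exists_isParentMap_dist hT r
    obtain ⟨S, hS, hcard⟩ := hπ.exists_is2Packing_ncard_eq
    exact ⟨S, hS.isCoronaCode_of_three_le_sd hcard hT.preconnected h3 hsd.ge⟩
  · rintro ⟨E, hE⟩
    exact hE.sd_eq_three hT

end Characterization

/-- A finite tree `T` with at least three vertices has domination
subdivision number 3 if and only if `T` is a general corona of a tree. -/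
theorem sd_eq_three_iff_isGeneralCorona {V : Type u} [Fintype V]
    (T : SimpleGraph V) (hT : T.IsTree) (h3 : 3 ≤ Fintype.card V) :
    sd T = 3 ↔ IsGeneralCoronaOfTree T := by
  rw [← Nat.card_eq_fintype_card] at h3
  rw [sd_eq_three_iff_exists_isCoronaCode hT h3, isGeneralCoronaOfTree_iff_exists_isCoronaCode hT]

end GenCorona
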